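/- arXiv:2406.11365 — 2 statements merged into one kernel-verified Lean document; each statement's English description precedes it below -/
import Mathlib

section
/- S_n is a fundamental solution of the heat operator ∂_t − Δ with pole at (0,0): for every compactly supported C^∞ test function φ : ℝ × ℝⁿ → ℝ, ∫_{(0,∞) × ℝⁿ} S_n(t,x)·(−∂_t φ(t,x) − Δφ(t,x)) dx dt = φ(0,0), where Δφ = Σ_{i=1}^n ∂²φ/∂x_i² and the integral converges absolutely. -/
open Real MeasureTheory

/-- The fundamental solution of the heat equation in `ℝⁿ`. -/
noncomputable def Sn (n : ℕ) (t : ℝ) (x : EuclideanSpace ℝ (Fin n)) : ℝ :=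
  if 0 < t then (4 * Real.pi * t) ^ (-(n : ℝ) / 2) * Real.exp (-‖x‖ ^ 2 / (4 * t)) else 0

/-!
Let `F t = ∫ S(t, x) φ(t, x) dx`. Substituting `x = √t y` gives `F t = ∫ S(1, y) φ(t, √t y) dy`,
which is continuous up to `t = 0` with `F 0 = φ(0, 0)`, and differentiating along the parabolas
`t ↦ (t, √t y)` gives `F' t = ∫ S(t, x) (∂_t φ + (2t)⁻¹ x · ∇φ) dx` for `t > 0`. Since
`∇S = -(2t)⁻¹ x S`, integration by parts turns the second term into `∫ S Δφ dx`. Hence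
`∫ S (-∂_t φ - Δφ) dx dt = -∫ F' t dt = F 0`, as `F` vanishes for large times.
-/

section HeatEquation

open Set Filter Topology Module InnerProductSpace Laplacian

section Slice

variable {𝕜 E F G : Type*} [NontriviallyNormedField 𝕜] [NormedAddCommGroup E] [NormedSpace 𝕜 E]
  [NormedAddCommGroup F] [NormedSpace 𝕜 F] [NormedAddCommGroup G] [NormedSpace 𝕜 G]

theorem deriv_slice_eq_fderiv {φ : 𝕜 × E → F} {p : 𝕜 × E} (hφ : DifferentiableAt 𝕜 φ p) :
    deriv (fun s ↦ φ (s, p.2)) p.1 = fderiv 𝕜 φ p (1, 0) :=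
  (hφ.hasFDerivAt.comp_hasDerivAt p.1
    (hasFDerivAt_prodMk_left p.1 p.2).hasDerivAt).deriv.trans (by simp)

theorem fderiv_slice_apply {φ : E × F → G} {p : E × F} (hφ : DifferentiableAt 𝕜 φ p) (v : F) :
    fderiv 𝕜 (fun y ↦ φ (p.1, y)) p.2 v = fderiv 𝕜 φ p (0, v) := by
  have hslice : HasFDerivAt (fun y ↦ φ (p.1, y)) (fderiv 𝕜 φ p ∘L .inr 𝕜 E F) p.2 :=
    hφ.hasFDerivAt.comp p.2 (hasFDerivAt_prodMk_right p.1 p.2)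
  simp [hslice.fderiv]

theorem iteratedFDeriv_comp_const_add_clm {n : ℕ} {f : E → F} (hf : ContDiff 𝕜 n f)
    (a : E) (g : G →L[𝕜] E) (x : G) :
    iteratedFDeriv 𝕜 n (fun y ↦ f (a + g y)) x =
      (iteratedFDeriv 𝕜 n f (a + g x)).compContinuousLinearMap fun _ ↦ g := by
  have hfa : ContDiff 𝕜 n fun z ↦ f (a + z) := by fun_prop
  simpa only [iteratedFDeriv_comp_add_left, Function.comp_def] using
    g.iteratedFDeriv_comp_right hfa x le_rfl

end Slice

section Laplacian

variable {E F ι : Type*} [NormedAddCommGroup E] [InnerProductSpace ℝ E] [FiniteDimensional ℝ E]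
  [NormedAddCommGroup F] [NormedSpace ℝ F] [Fintype ι]

theorem laplacian_eq_sum_iteratedDeriv_line {f : E → F} (hf : ContDiff ℝ 2 f)
    (b : OrthonormalBasis ι ℝ E) (x : E) :
    Δ f x = ∑ i, iteratedDeriv 2 (fun s : ℝ ↦ f (x + s • b i)) 0 := by
  rw [laplacian_eq_iteratedFDeriv_orthonormalBasis f b]
  refine Finset.sum_congr rfl fun i _ ↦ ?_
  have hline :=
    iteratedFDeriv_comp_const_add_clm hf x (ContinuousLinearMap.toSpanSingleton ℝ (b i)) 0
  simp only [ContinuousLinearMap.toSpanSingleton_apply, zero_smul, add_zero] at hline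
  rw [iteratedDeriv_eq_iteratedFDeriv, hline]
  simp only [ContinuousMultilinearMap.compContinuousLinearMap_apply,
    ContinuousLinearMap.toSpanSingleton_apply, one_smul]
  congr 1
  ext j; fin_cases j <;> rfl

theorem laplacian_eq_sum_fderiv_fderiv {f : E → F} (hf : ContDiff ℝ 2 f)
    (b : OrthonormalBasis ι ℝ E) (x : E) :
    Δ f x = ∑ i, fderiv ℝ (fun y ↦ fderiv ℝ f y (b i)) x (b i) := by
  have hdf : DifferentiableAt ℝ (fderiv ℝ f) x :=
    (hf.fderiv_right (m := 1) (by norm_num)).differentiable one_ne_zero x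
  simp [laplacian_eq_iteratedFDeriv_orthonormalBasis f b, iteratedFDeriv_two_apply,
    fderiv_clm_apply hdf (differentiableAt_const _)]

theorem continuous_laplacian {f : E → F} (hf : ContDiff ℝ 2 f) : Continuous (Δ f) := by
  rw [laplacian_eq_iteratedFDeriv_stdOrthonormalBasis]
  fun_prop

theorem hasCompactSupport_laplacian {f : E → F} (hf : HasCompactSupport f) :
    HasCompactSupport (Δ f) :=
  (hf.iteratedFDeriv (𝕜 := ℝ) 2).mono fun x hx hx' ↦
    hx (by simp [laplacian_eq_iteratedFDeriv_stdOrthonormalBasis, hx'])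

theorem laplacian_slice_eq_sum_iteratedFDeriv {φ : ℝ × E → F} (hφ : ContDiff ℝ 2 φ)
    (b : OrthonormalBasis ι ℝ E) (p : ℝ × E) :
    Δ (fun y ↦ φ (p.1, y)) p.2 = ∑ i, iteratedFDeriv ℝ 2 φ p ![(0, b i), (0, b i)] := by
  have hslice := iteratedFDeriv_comp_const_add_clm hφ (p.1, 0) (ContinuousLinearMap.inr ℝ ℝ E) p.2
  simp only [ContinuousLinearMap.inr_apply, Prod.mk_add_mk, add_zero, zero_add] at hslice
  rw [laplacian_eq_iteratedFDeriv_orthonormalBasis _ b]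
  refine Finset.sum_congr rfl fun i _ ↦ ?_
  rw [hslice, ContinuousMultilinearMap.compContinuousLinearMap_apply]
  congr 1
  ext j : 1; fin_cases j <;> rfl

end Laplacian

section ParabolicScaling

variable {E F : Type*} [NormedAddCommGroup E] [NormedSpace ℝ E] [NormedAddCommGroup F]
  [NormedSpace ℝ F]

theorem hasDerivAt_comp_sqrt_smul {φ : ℝ × E → F} {s : ℝ} (hs : 0 < s) (y : E)
    (hφ : DifferentiableAt ℝ φ (s, √s • y)) :
    HasDerivAt (fun s ↦ φ (s, √s • y)) (fderiv ℝ φ (s, √s • y) (1, (2 * s)⁻¹ • √s • y)) s := by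
  have hspeed : 1 / (2 * √s) = (2 * s)⁻¹ * √s := by
    field_simp
    exact (sq_sqrt hs.le).symm
  have hcurve : HasDerivAt (fun s : ℝ ↦ (s, √s • y)) (1, (2 * s)⁻¹ • √s • y) s := by
    rw [smul_smul, ← hspeed]
    exact (hasDerivAt_id s).prodMk ((hasDerivAt_sqrt hs.ne').smul_const y)
  exact hφ.hasFDerivAt.comp_hasDerivAt s hcurve

theorem exists_norm_fderiv_one_inv_smul_le {φ : ℝ × E → F} (hφ : ContDiff ℝ 1 φ)
    (hφ_supp : HasCompactSupport φ) {ε : ℝ} (hε : 0 < ε) :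
    ∃ C, ∀ s, ε ≤ s → ∀ x, ‖fderiv ℝ φ (s, x) (1, (2 * s)⁻¹ • x)‖ ≤ C := by
  -- Truncating `s` at `ε` in the coefficient gives a function continuous on all of spacetime.
  let ψ : ℝ × E → F := fun p ↦ fderiv ℝ φ p (1, (2 * max p.1 ε)⁻¹ • p.2)
  have hψ : Continuous ψ := by
    have hdφ : Continuous (fderiv ℝ φ) := hφ.continuous_fderiv one_ne_zero
    have hne (p : ℝ × E) : 2 * max p.1 ε ≠ 0 := by positivity
    exact hdφ.clm_apply (by fun_prop (disch := assumption))
  have hψ_supp : HasCompactSupport ψ :=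
    (hφ_supp.fderiv ℝ).mono fun p hp hp' ↦ hp (by simp [ψ, hp'])
  obtain ⟨C, hC⟩ := hψ_supp.exists_bound_of_continuous hψ
  exact ⟨C, fun s hs x ↦ by simpa [ψ, max_eq_left hs] using hC (s, x)⟩

end ParabolicScaling

section CompactSupport

variable {X Y M : Type*} [TopologicalSpace X] [TopologicalSpace Y] [Zero M]

theorem eventually_forall_eq_zero_of_hasCompactSupport [LinearOrder X] [ClosedIciTopology X]
    [Nonempty X] [NoMaxOrder X] {f : X × Y → M} (hf : HasCompactSupport f) :
    ∀ᶠ x in atTop, ∀ y, f (x, y) = 0 := by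
  obtain ⟨T, hT⟩ := (hf.isCompact.image continuous_fst).bddAbove
  filter_upwards [eventually_gt_atTop T] with x hx y
  by_contra hxy
  exact hx.not_ge (hT ⟨(x, y), subset_tsupport f hxy, rfl⟩)

theorem hasCompactSupport_slice [T2Space X] [T2Space Y] {f : X × Y → M}
    (hf : HasCompactSupport f) (x : X) : HasCompactSupport fun y ↦ f (x, y) :=
  hf.comp_isClosedEmbedding <| Function.LeftInverse.isClosedEmbedding (f := Prod.snd)
    (fun _ ↦ rfl) continuous_snd (by fun_prop)

end CompactSupport

variable {V : Type*} [NormedAddCommGroup V] [InnerProductSpace ℝ V]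

/-- The heat kernel `S_n` on an arbitrary Euclidean space `V` of dimension `n`, extended by zero
to times `t ≤ 0`. -/
noncomputable def heatKernel (t : ℝ) (x : V) : ℝ :=
  if 0 < t then (4 * π * t) ^ (-(finrank ℝ V : ℝ) / 2) * exp (-‖x‖ ^ 2 / (4 * t)) else 0

theorem Sn_eq_heatKernel (n : ℕ) : Sn n = heatKernel := by
  ext t x
  simp [Sn, heatKernel]

section HeatKernel

theorem heatKernel_of_pos {t : ℝ} (ht : 0 < t) (x : V) :
    heatKernel t x = (4 * π * t) ^ (-(finrank ℝ V : ℝ) / 2) * exp (-(4 * t)⁻¹ * ‖x‖ ^ 2) := by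
  rw [heatKernel, if_pos ht]
  ring_nf

theorem heatKernel_nonneg (t : ℝ) (x : V) : 0 ≤ heatKernel t x := by
  unfold heatKernel
  split_ifs <;> positivity

theorem continuous_heatKernel (t : ℝ) : Continuous (heatKernel t : V → ℝ) := by
  unfold heatKernel
  split_ifs <;> fun_prop

theorem heatKernel_sqrt_smul {t : ℝ} (ht : 0 < t) (y : V) :
    heatKernel t (√t • y) = (√t ^ finrank ℝ V)⁻¹ * heatKernel 1 y := by
  have hpow : (√t ^ finrank ℝ V)⁻¹ = t ^ (-(finrank ℝ V : ℝ) / 2) := by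
    rw [sqrt_eq_rpow, ← rpow_mul_natCast ht.le, ← rpow_neg ht.le]
    ring_nf
  have hnorm : (4 * t)⁻¹ * ‖√t • y‖ ^ 2 = (4 * 1)⁻¹ * ‖y‖ ^ 2 := by
    rw [norm_smul, mul_pow, norm_eq_abs, sq_abs, sq_sqrt ht.le]
    field_simp
  rw [heatKernel_of_pos ht, heatKernel_of_pos one_pos, neg_mul, neg_mul, hnorm, hpow,
    mul_rpow (by positivity) ht.le, mul_one (4 * π)]
  ring

theorem hasFDerivAt_heatKernel {t : ℝ} (ht : 0 < t) (x : V) :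
    HasFDerivAt (heatKernel t) (-((2 * t)⁻¹ * heatKernel t x) • innerSL ℝ x) x := by
  have hexp := (((hasStrictFDerivAt_norm_sq x).hasFDerivAt.const_mul (-(4 * t)⁻¹)).exp).const_mul
    ((4 * π * t) ^ (-(finrank ℝ V : ℝ) / 2))
  rw [funext (heatKernel_of_pos ht)]
  refine hexp.congr_fderiv ?_
  module

theorem fderiv_heatKernel_apply {t : ℝ} (ht : 0 < t) (x v : V) :
    fderiv ℝ (heatKernel t) x v = -((2 * t)⁻¹ * heatKernel t x * inner ℝ x v) := by
  simp [(hasFDerivAt_heatKernel ht x).fderiv]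

theorem measurable_heatKernel_uncurry [MeasurableSpace V] [OpensMeasurableSpace V] :
    Measurable fun p : ℝ × V ↦ heatKernel p.1 p.2 := by
  unfold heatKernel
  exact Measurable.ite (measurableSet_lt measurable_const measurable_fst) (by fun_prop)
    measurable_const

variable [FiniteDimensional ℝ V] [MeasurableSpace V] [BorelSpace V]

theorem integral_heatKernel {t : ℝ} (ht : 0 < t) : ∫ x : V, heatKernel t x = 1 := by
  simp_rw [heatKernel_of_pos ht]
  rw [integral_const_mul, GaussianFourier.integral_rexp_neg_mul_sq_norm (by positivity),
    div_inv_eq_mul, show π * (4 * t) = 4 * π * t by ring, ← rpow_add (by positivity), neg_div,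
    neg_add_cancel, rpow_zero]

theorem integrable_heatKernel {t : ℝ} (ht : 0 < t) : Integrable (heatKernel t : V → ℝ) :=
  .of_integral_ne_zero (by simp [integral_heatKernel ht])

theorem integral_heatKernel_mul_eq_integral_comp_sqrt_smul {t : ℝ} (ht : 0 < t) (u : V → ℝ) :
    ∫ x, heatKernel t x * u x = ∫ y, heatKernel 1 y * u (√t • y) := by
  have hpos : 0 < (√t ^ finrank ℝ V)⁻¹ := by positivity
  have hscale := Measure.integral_comp_smul volume (fun x ↦ heatKernel t x * u x) √t
  simp only [heatKernel_sqrt_smul ht, mul_assoc, integral_const_mul, abs_of_pos hpos,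
    smul_eq_mul] at hscale
  exact (mul_left_cancel₀ hpos.ne' hscale).symm

theorem integral_heatKernel_mul_inner_mul {u : V → ℝ} (hu : ContDiff ℝ 1 u)
    (hu_supp : HasCompactSupport u) {t : ℝ} (ht : 0 < t) (v : V) :
    ∫ x, heatKernel t x * (inner ℝ x v * u x) = 2 * t * ∫ x, heatKernel t x * fderiv ℝ u x v := by
  have hK := continuous_heatKernel (V := V) t
  have hu_cont := hu.continuous
  have hdu : Continuous fun x ↦ fderiv ℝ u x v :=
    (hu.continuous_fderiv one_ne_zero).clm_apply continuous_const
  have hparts := integral_mul_fderiv_eq_neg_fderiv_mul_of_integrable (μ := (volume : Measure V))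
    (f := heatKernel t) (g := u) (v := v)
    (Continuous.integrable_of_hasCompactSupport
      (by simp only [fderiv_heatKernel_apply ht]; fun_prop) hu_supp.mul_left)
    ((hK.mul hdu).integrable_of_hasCompactSupport (hu_supp.fderiv_apply (𝕜 := ℝ) v).mul_left)
    ((hK.mul hu_cont).integrable_of_hasCompactSupport hu_supp.mul_left)
    (fun x _ ↦ (hasFDerivAt_heatKernel ht x).differentiableAt)
    (fun x _ ↦ hu.differentiable one_ne_zero x)
  rw [hparts, ← integral_neg, ← integral_const_mul]
  congr 1 with x
  rw [fderiv_heatKernel_apply ht]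
  field_simp

theorem integral_heatKernel_mul_fderiv_self {w : V → ℝ} (hw : ContDiff ℝ 2 w)
    (hw_supp : HasCompactSupport w) {t : ℝ} (ht : 0 < t) :
    ∫ x, heatKernel t x * fderiv ℝ w x x = 2 * t * ∫ x, heatKernel t x * Δ w x := by
  have hK := continuous_heatKernel (V := V) t
  let b := stdOrthonormalBasis ℝ V
  have hdw (v : V) : ContDiff ℝ 1 fun x ↦ fderiv ℝ w x v :=
    (hw.fderiv_right (by norm_num)).clm_apply contDiff_const
  have hdw_supp (v : V) : HasCompactSupport fun x ↦ fderiv ℝ w x v := hw_supp.fderiv_apply ℝ v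
  have hexpand (x : V) : fderiv ℝ w x x = ∑ i, inner ℝ x (b i) * fderiv ℝ w x (b i) := by
    conv_lhs => enter [2]; rw [← b.sum_repr' x]
    simp [real_inner_comm]
  simp only [hexpand, laplacian_eq_sum_fderiv_fderiv hw b, Finset.mul_sum]
  rw [integral_finsetSum, integral_finsetSum, Finset.mul_sum]
  · exact Finset.sum_congr rfl fun i _ ↦
      integral_heatKernel_mul_inner_mul (hdw (b i)) (hdw_supp (b i)) ht (b i)
  · exact fun i _ ↦ (hK.mul (((hdw (b i)).continuous_fderiv one_ne_zero).clm_apply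
      continuous_const)).integrable_of_hasCompactSupport
      ((hdw_supp (b i)).fderiv_apply ℝ (b i)).mul_left
  · exact fun i _ ↦ (hK.mul ((continuous_id.inner continuous_const).mul
      (hdw (b i)).continuous)).integrable_of_hasCompactSupport (hdw_supp (b i)).mul_left.mul_left

theorem integrable_heatKernel_Ioc_prod (T : ℝ) :
    Integrable (fun p : ℝ × V ↦ heatKernel p.1 p.2) ((volume.restrict (Ioc 0 T)).prod volume) := by
  rw [integrable_prod_iff measurable_heatKernel_uncurry.aestronglyMeasurable]
  constructor
  · filter_upwards [ae_restrict_mem measurableSet_Ioc] with t ht using integrable_heatKernel ht.1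
  · refine (integrable_const (1 : ℝ)).congr ?_
    filter_upwards [ae_restrict_mem measurableSet_Ioc] with t ht
    simp_rw [norm_of_nonneg (heatKernel_nonneg t _), integral_heatKernel ht.1]

theorem integrableOn_heatKernel_mul {ψ : ℝ × V → ℝ} (hψ : Continuous ψ)
    (hψ_supp : HasCompactSupport ψ) :
    IntegrableOn (fun p ↦ heatKernel p.1 p.2 * ψ p) (Ioi 0 ×ˢ univ) := by
  obtain ⟨T, hT⟩ := eventually_atTop.1 (eventually_forall_eq_zero_of_hasCompactSupport hψ_supp)
  obtain ⟨C, hC⟩ := hψ_supp.exists_bound_of_continuous hψ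
  have hstrip : IntegrableOn (fun p ↦ heatKernel p.1 p.2 * ψ p) (Ioc 0 T ×ˢ univ) := by
    rw [IntegrableOn, Measure.volume_eq_prod, ← Measure.prod_restrict, Measure.restrict_univ]
    exact (integrable_heatKernel_Ioc_prod T).mul_bdd hψ.aestronglyMeasurable (.of_forall hC)
  refine hstrip.of_forall_sdiff_eq_zero (measurableSet_Ioi.prod .univ) ?_
  rintro ⟨t, x⟩ ⟨⟨ht, -⟩, hmem⟩
  have hTt : T ≤ t := (not_le.1 fun h ↦ hmem ⟨⟨ht, h⟩, trivial⟩).le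
  simp [hT t hTt x]

end HeatKernel

section HeatMean

variable [FiniteDimensional ℝ V] [MeasurableSpace V] [BorelSpace V]

/-- The mean of `φ (t, ·)` against the heat kernel at time `t`, written in the self-similar variable
`y = x / √t` so that it is continuous up to `t = 0`. -/
noncomputable def heatMean (φ : ℝ × V → ℝ) (t : ℝ) : ℝ := ∫ y, heatKernel 1 y * φ (t, √t • y)

theorem heatMean_zero (φ : ℝ × V → ℝ) : heatMean φ 0 = φ (0, 0) := by
  simp [heatMean, integral_mul_const, integral_heatKernel]

theorem tendsto_heatMean_atTop {φ : ℝ × V → ℝ} (hφ_supp : HasCompactSupport φ) :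
    Tendsto (heatMean φ) atTop (𝓝 0) := by
  refine tendsto_const_nhds.congr' ?_
  filter_upwards [eventually_forall_eq_zero_of_hasCompactSupport hφ_supp] with t ht
  simp [heatMean, ht]

theorem continuous_heatMean {φ : ℝ × V → ℝ} (hφ : Continuous φ) (hφ_supp : HasCompactSupport φ) :
    Continuous (heatMean φ) := by
  obtain ⟨C, hC⟩ := hφ_supp.exists_bound_of_continuous hφ
  have hK := continuous_heatKernel (V := V) 1
  refine continuous_of_dominated (bound := fun y ↦ heatKernel 1 y * C)
    (fun t ↦ Continuous.aestronglyMeasurable (by fun_prop)) (fun t ↦ .of_forall fun y ↦ ?_)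
    ((integrable_heatKernel one_pos).mul_const C) (.of_forall fun y ↦ by fun_prop)
  rw [norm_mul, norm_of_nonneg (heatKernel_nonneg 1 y)]
  exact mul_le_mul_of_nonneg_left (hC _) (heatKernel_nonneg 1 y)

theorem hasDerivAt_heatMean {φ : ℝ × V → ℝ} (hφ : ContDiff ℝ 1 φ) (hφ_supp : HasCompactSupport φ)
    {t : ℝ} (ht : 0 < t) :
    HasDerivAt (heatMean φ) (∫ x, heatKernel t x * fderiv ℝ φ (t, x) (1, (2 * t)⁻¹ • x)) t := by
  have hK := continuous_heatKernel (V := V) 1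
  have hφ_cont := hφ.continuous
  obtain ⟨C, hC⟩ := exists_norm_fderiv_one_inv_smul_le hφ hφ_supp (half_pos ht)
  obtain ⟨D, hD⟩ := hφ_supp.exists_bound_of_continuous hφ_cont
  rw [integral_heatKernel_mul_eq_integral_comp_sqrt_smul ht fun x ↦
    fderiv ℝ φ (t, x) (1, (2 * t)⁻¹ • x)]
  refine (hasDerivAt_integral_of_dominated_loc_of_deriv_le (μ := (volume : Measure V))
    (F := fun s y ↦ heatKernel 1 y * φ (s, √s • y))
    (F' := fun s y ↦ heatKernel 1 y * fderiv ℝ φ (s, √s • y) (1, (2 * s)⁻¹ • √s • y))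
    (bound := fun y ↦ heatKernel 1 y * C) (Ioi_mem_nhds (half_lt_self ht))
    (.of_forall fun s ↦ Continuous.aestronglyMeasurable (by fun_prop))
    ((integrable_heatKernel one_pos).mul_bdd (Continuous.aestronglyMeasurable (by fun_prop))
      (.of_forall fun y ↦ hD _))
    (Continuous.aestronglyMeasurable (by fun_prop))
    (.of_forall fun y s hs ↦ ?_) ((integrable_heatKernel one_pos).mul_const C)
    (.of_forall fun y s hs ↦ ?_)).2
  · rw [norm_mul, norm_of_nonneg (heatKernel_nonneg 1 y)]
    exact mul_le_mul_of_nonneg_left (hC s hs.le _) (heatKernel_nonneg 1 y)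
  · exact (hasDerivAt_comp_sqrt_smul ((half_pos ht).trans hs) y
      (hφ.differentiable one_ne_zero _)).const_mul _

end HeatMean

section Adjoint

variable [FiniteDimensional ℝ V]

/-- The formal adjoint `-∂_t - Δ` of the heat operator, acting on functions on spacetime `ℝ × V`. -/
noncomputable def adjointHeatOperator (φ : ℝ × V → ℝ) (p : ℝ × V) : ℝ :=
  -deriv (fun s ↦ φ (s, p.2)) p.1 - Δ (fun y ↦ φ (p.1, y)) p.2

theorem adjointHeatOperator_euclideanSpace {n : ℕ} {φ : ℝ × EuclideanSpace ℝ (Fin n) → ℝ}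
    (hφ : ContDiff ℝ 2 φ) (p : ℝ × EuclideanSpace ℝ (Fin n)) :
    adjointHeatOperator φ p = -deriv (fun s ↦ φ (s, p.2)) p.1 - ∑ i : Fin n,
      iteratedDeriv 2 (fun s : ℝ ↦ φ (p.1, p.2 + s • EuclideanSpace.single i (1 : ℝ))) 0 := by
  simp only [adjointHeatOperator, laplacian_eq_sum_iteratedDeriv_line (f := fun y ↦ φ (p.1, y))
    (by fun_prop) (EuclideanSpace.basisFun (Fin n) ℝ), EuclideanSpace.basisFun_apply]

theorem adjointHeatOperator_eq {φ : ℝ × V → ℝ} (hφ : ContDiff ℝ 2 φ) (p : ℝ × V) :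
    adjointHeatOperator φ p = -fderiv ℝ φ p (1, 0) -
      ∑ i, iteratedFDeriv ℝ 2 φ p
        ![(0, stdOrthonormalBasis ℝ V i), (0, stdOrthonormalBasis ℝ V i)] := by
  rw [adjointHeatOperator, deriv_slice_eq_fderiv (hφ.differentiable two_ne_zero p),
    laplacian_slice_eq_sum_iteratedFDeriv hφ (stdOrthonormalBasis ℝ V)]

theorem continuous_adjointHeatOperator {φ : ℝ × V → ℝ} (hφ : ContDiff ℝ 2 φ) :
    Continuous (adjointHeatOperator φ) := by
  have hdφ : Continuous (fderiv ℝ φ) := hφ.continuous_fderiv two_ne_zero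
  rw [funext (adjointHeatOperator_eq hφ)]
  fun_prop

theorem hasCompactSupport_adjointHeatOperator {φ : ℝ × V → ℝ} (hφ : ContDiff ℝ 2 φ)
    (hφ_supp : HasCompactSupport φ) : HasCompactSupport (adjointHeatOperator φ) := by
  refine hφ_supp.mono' fun p hp ↦ ?_
  contrapose! hp
  have hd : fderiv ℝ φ p = 0 :=
    Function.notMem_support.1 fun h ↦ hp (support_fderiv_subset ℝ h)
  have hdd : iteratedFDeriv ℝ 2 φ p = 0 :=
    Function.notMem_support.1 fun h ↦ hp (support_iteratedFDeriv_subset 2 h)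
  simp [adjointHeatOperator_eq hφ, hd, hdd]

variable [MeasurableSpace V] [BorelSpace V]

theorem integral_heatKernel_mul_adjointHeatOperator {φ : ℝ × V → ℝ} (hφ : ContDiff ℝ 2 φ)
    (hφ_supp : HasCompactSupport φ) {t : ℝ} (ht : 0 < t) :
    ∫ x, heatKernel t x * adjointHeatOperator φ (t, x) =
      -∫ x, heatKernel t x * fderiv ℝ φ (t, x) (1, (2 * t)⁻¹ • x) := by
  have hK := continuous_heatKernel (V := V) t
  have hw : ContDiff ℝ 2 fun y ↦ φ (t, y) := by fun_prop
  have hw_supp : HasCompactSupport fun y ↦ φ (t, y) := hasCompactSupport_slice hφ_supp t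
  have hφ_diff : Differentiable ℝ φ := hφ.differentiable two_ne_zero
  have htime : Integrable fun x ↦ heatKernel t x * fderiv ℝ φ (t, x) (1, 0) := by
    have hdφ : Continuous (fderiv ℝ φ) := hφ.continuous_fderiv two_ne_zero
    exact Continuous.integrable_of_hasCompactSupport (by fun_prop)
      (hasCompactSupport_slice (hφ_supp.fderiv_apply ℝ (1, 0)) t).mul_left
  have hradial : Integrable fun x ↦ heatKernel t x * fderiv ℝ (fun y ↦ φ (t, y)) x x := by
    have hdw := hw.continuous_fderiv two_ne_zero
    refine Continuous.integrable_of_hasCompactSupport (by fun_prop) (HasCompactSupport.mul_left ?_)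
    exact (hw_supp.fderiv ℝ).mono fun x hx hx' ↦ hx (by simp [hx'])
  have hlap : Integrable fun x ↦ heatKernel t x * Δ (fun y ↦ φ (t, y)) x :=
    (hK.mul (continuous_laplacian hw)).integrable_of_hasCompactSupport
      (hasCompactSupport_laplacian hw_supp).mul_left
  have hsplit (x : V) : fderiv ℝ φ (t, x) (1, (2 * t)⁻¹ • x) =
      fderiv ℝ φ (t, x) (1, 0) + (2 * t)⁻¹ * fderiv ℝ (fun y ↦ φ (t, y)) x x := by
    rw [fderiv_slice_apply (hφ_diff (t, x)), ← smul_eq_mul (2 * t)⁻¹, ← map_smul, ← map_add]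
    simp
  simp only [hsplit, mul_add, mul_left_comm _ (2 * t)⁻¹]
  rw [integral_add htime (hradial.const_mul _), integral_const_mul,
    integral_heatKernel_mul_fderiv_self hw hw_supp ht, inv_mul_cancel_left₀ (by positivity)]
  rw [← integral_add htime hlap, ← integral_neg]
  congr 1 with x
  rw [adjointHeatOperator, deriv_slice_eq_fderiv (hφ_diff (t, x))]
  ring

theorem hasDerivAt_heatMean_adjointHeatOperator {φ : ℝ × V → ℝ} (hφ : ContDiff ℝ 2 φ)
    (hφ_supp : HasCompactSupport φ) {t : ℝ} (ht : 0 < t) :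
    HasDerivAt (heatMean φ) (-∫ x, heatKernel t x * adjointHeatOperator φ (t, x)) t := by
  rw [integral_heatKernel_mul_adjointHeatOperator hφ hφ_supp ht, neg_neg]
  exact hasDerivAt_heatMean (hφ.of_le one_le_two) hφ_supp ht

theorem Sn_fundamental_solution_general {φ : ℝ × V → ℝ} (hφ : ContDiff ℝ 2 φ)
    (hφ_supp : HasCompactSupport φ) :
    IntegrableOn (fun p ↦ heatKernel p.1 p.2 * adjointHeatOperator φ p) (Ioi 0 ×ˢ univ) ∧
      ∫ p in Ioi 0 ×ˢ univ, heatKernel p.1 p.2 * adjointHeatOperator φ p = φ (0, 0) := by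
  have hint : IntegrableOn (fun p ↦ heatKernel p.1 p.2 * adjointHeatOperator φ p)
      (Ioi 0 ×ˢ univ) :=
    integrableOn_heatKernel_mul (continuous_adjointHeatOperator hφ)
      (hasCompactSupport_adjointHeatOperator hφ hφ_supp)
  have hint_prod := hint
  rw [IntegrableOn, Measure.volume_eq_prod, ← Measure.prod_restrict, Measure.restrict_univ]
    at hint_prod
  have hderiv (t : ℝ) (ht : t ∈ Ioi 0) := hasDerivAt_heatMean_adjointHeatOperator hφ hφ_supp ht
  have hftc := integral_Ioi_of_hasDerivAt_of_tendsto
    (continuous_heatMean hφ.continuous hφ_supp).continuousWithinAt hderiv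
    hint_prod.integral_prod_left.neg (tendsto_heatMean_atTop hφ_supp)
  rw [integral_neg, heatMean_zero, zero_sub, neg_inj] at hftc
  refine ⟨hint, ?_⟩
  rw [Measure.volume_eq_prod, setIntegral_prod _ hint]
  simpa only [Measure.restrict_univ] using hftc

end Adjoint

end HeatEquation

/-- `S_n` is a fundamental solution of the heat operator `∂_t − Δ` with pole at `(0,0)`:
for every compactly supported smooth test function `φ` on `ℝ × ℝⁿ`, the integral of
`S_n · (−∂_t φ − Δφ)` over `(0,∞) × ℝⁿ` converges absolutely and equals `φ(0,0)`. -/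
theorem Sn_fundamental_solution (n : ℕ) (hn : 2 ≤ n)
    (φ : ℝ × EuclideanSpace ℝ (Fin n) → ℝ)
    (hφ : ContDiff ℝ (⊤ : ℕ∞) φ) (hφsupp : HasCompactSupport φ) :
    IntegrableOn
      (fun p : ℝ × EuclideanSpace ℝ (Fin n) =>
        Sn n p.1 p.2 *
          (-(deriv (fun s : ℝ => φ (s, p.2)) p.1) -
            ∑ i : Fin n,
              iteratedDeriv 2 (fun s : ℝ => φ (p.1, p.2 + s • EuclideanSpace.single i (1 : ℝ))) 0))
      (Set.Ioi (0 : ℝ) ×ˢ (Set.univ : Set (EuclideanSpace ℝ (Fin n)))) ∧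
    (∫ p in Set.Ioi (0 : ℝ) ×ˢ (Set.univ : Set (EuclideanSpace ℝ (Fin n))),
        Sn n p.1 p.2 *
          (-(deriv (fun s : ℝ => φ (s, p.2)) p.1) -
            ∑ i : Fin n,
              iteratedDeriv 2 (fun s : ℝ => φ (p.1, p.2 + s • EuclideanSpace.single i (1 : ℝ))) 0))
      = φ (0, 0) := by
  have hφ2 : ContDiff ℝ 2 φ := hφ.of_le (WithTop.coe_le_coe.2 le_top)
  simpa only [Sn_eq_heatKernel, adjointHeatOperator_euclideanSpace hφ2] using
    Sn_fundamental_solution_general hφ2 hφsupp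
end

section
/- Assume σ is upper (n−1)-Ahlfors regular with constant c. Then for every β ∈ (0,1) there exists a constant C > 0, depending only on n, c, T, β and σ(ℝⁿ), such that the single layer heat potential satisfies the Hölder estimate in space |v[μ](t,x₁) − v[μ](t,x₂)| ≤ C·(sup |μ|)·‖x₁ − x₂‖^β for all t ∈ [0,T] and all x₁, x₂ ∈ ℝⁿ. -/
open Real MeasureTheory

/-- The single layer heat potential `v[μ](t,x) = ∫₀ᵗ ∫ S_n(t−τ, x−y) μ(τ,y) dσ(y) dτ`. -/
noncomputable def singleLayer (n : ℕ) (σ : Measure (EuclideanSpace ℝ (Fin n)))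
    (μ : ℝ → EuclideanSpace ℝ (Fin n) → ℝ) (t : ℝ) (x : EuclideanSpace ℝ (Fin n)) : ℝ :=
  ∫ τ in Set.Ioc (0 : ℝ) t, ∫ y, Sn n (t - τ) (x - y) * μ τ y ∂σ

/-!
Integrating `exp (-r)` over the sets `{y | ‖x - y‖ ^ 2 / a < r}` shows that, for an upper
`d`-Ahlfors regular measure, the Gaussian `exp (-‖x - y‖ ^ 2 / a)` has integral at most
`c a ^ (d / 2) Γ(d / 2 + 1)`. Since `u ↦ exp (-u ^ 2 / 2)` is `1`-Lipschitz with values in `[0, 1]`,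
it is `β`-Hölder, and `exp (-u ^ 2) - exp (-v ^ 2)` factors as a difference of two squares; so the
Hölder factor `‖x₁ - x₂‖ ^ β s ^ (-β / 2)` costs only a slightly wider Gaussian. Hence the heat
evolutions at time `s` evaluated at `x₁` and `x₂` differ by at most a multiple of
`s ^ ((d - n - β) / 2)`, which is integrable at `s = 0` as soon as `n + β < d + 2`; in codimension
one this is `β < 1`.
-/

section Ahlfors

variable {X : Type*} [PseudoMetricSpace X] [MeasurableSpace X] {σ : Measure X} {d c : ℝ}

/-- Upper `d`-Ahlfors regularity with constant `c`: closed balls of radius `r > 0` have measure at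
most `c r ^ d`. The dimension `d` is a real number, so codimension one in `ℝⁿ` is `d = n - 1`
without truncated subtraction. -/
def IsUpperAhlforsRegular (d c : ℝ) (σ : Measure X) : Prop :=
  ∀ (x : X) (r : ℝ), 0 < r → σ (Metric.closedBall x r) ≤ ENNReal.ofReal (c * r ^ d)

theorem isUpperAhlforsRegular_natCast_sub_one_iff {n : ℕ} (hn : 1 ≤ n) :
    IsUpperAhlforsRegular (n - 1 : ℝ) c σ ↔ ∀ (x : X) (r : ℝ), 0 < r →
      σ (Metric.closedBall x r) ≤ ENNReal.ofReal (c * r ^ (n - 1)) := by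
  simp only [IsUpperAhlforsRegular, ← Nat.cast_pred hn, rpow_natCast]

namespace IsUpperAhlforsRegular

theorem isLocallyFiniteMeasure (hσ : IsUpperAhlforsRegular d c σ) : IsLocallyFiniteMeasure σ :=
  ⟨fun x => ⟨Metric.closedBall x 1, Metric.closedBall_mem_nhds x one_pos,
    (hσ x 1 one_pos).trans_lt ENNReal.ofReal_lt_top⟩⟩

theorem measure_sq_dist_div_lt_le (hσ : IsUpperAhlforsRegular d c σ) (x : X) {a r : ℝ}
    (ha : 0 < a) (hr : 0 < r) :
    σ {y | dist x y ^ 2 / a < r} ≤ ENNReal.ofReal (c * a ^ (d / 2) * r ^ (d / 2)) := by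
  have hsubset : {y | dist x y ^ 2 / a < r} ⊆ Metric.closedBall x √(a * r) := fun y hy => by
    rw [Metric.mem_closedBall, dist_comm]
    exact Real.le_sqrt_of_sq_le ((div_lt_iff₀' ha).1 hy).le
  have hpow : √(a * r) ^ d = a ^ (d / 2) * r ^ (d / 2) := by
    rw [Real.sqrt_eq_rpow, ← Real.rpow_mul (by positivity), Real.mul_rpow ha.le hr.le]
    congr 2 <;> ring
  calc σ {y | dist x y ^ 2 / a < r} ≤ σ (Metric.closedBall x √(a * r)) := measure_mono hsubset
    _ ≤ ENNReal.ofReal (c * √(a * r) ^ d) := hσ x _ (by positivity)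
    _ = ENNReal.ofReal (c * a ^ (d / 2) * r ^ (d / 2)) := by rw [hpow, mul_assoc]

end IsUpperAhlforsRegular

end Ahlfors

theorem lintegral_exp_neg_Ioi (a : ℝ) :
    ∫⁻ r in Set.Ioi a, ENNReal.ofReal (exp (-r)) = ENNReal.ofReal (exp (-a)) := by
  rw [← ofReal_integral_eq_lintegral_ofReal (integrableOn_exp_neg_Ioi a)
    (ae_of_all _ fun r => (exp_pos _).le), integral_exp_neg_Ioi]

theorem lintegral_exp_neg_mul_rpow {s : ℝ} (hs : 0 < s) :
    ∫⁻ r in Set.Ioi 0, ENNReal.ofReal (exp (-r) * r ^ (s - 1)) = ENNReal.ofReal (Gamma s) := by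
  rw [Gamma_eq_integral hs]
  refine (ofReal_integral_eq_lintegral_ofReal (GammaIntegral_convergent hs) ?_).symm
  filter_upwards [ae_restrict_mem measurableSet_Ioi] with r hr
  exact mul_nonneg (exp_pos _).le (rpow_nonneg (le_of_lt hr) _)

theorem lintegral_exp_neg_eq_lintegral_meas_lt {X : Type*} [MeasurableSpace X] (σ : Measure X)
    [SFinite σ] {f : X → ℝ} (hf : Measurable f) (hf₀ : ∀ y, 0 ≤ f y) :
    ∫⁻ y, ENNReal.ofReal (exp (-f y)) ∂σ =
      ∫⁻ r in Set.Ioi (0 : ℝ), ENNReal.ofReal (exp (-r)) * σ {y | f y < r} := by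
  have hmeas : Measurable (Function.uncurry fun (y : X) (r : ℝ) =>
      (Set.Ioi (f y)).indicator (fun r => ENNReal.ofReal (exp (-r))) r) :=
    Measurable.ite (measurableSet_lt (hf.comp measurable_fst) measurable_snd) (by fun_prop)
      measurable_const
  calc ∫⁻ y, ENNReal.ofReal (exp (-f y)) ∂σ
      = ∫⁻ y, (∫⁻ r in Set.Ioi (0 : ℝ),
          (Set.Ioi (f y)).indicator (fun r => ENNReal.ofReal (exp (-r))) r) ∂σ := by
        refine lintegral_congr fun y => ?_
        rw [lintegral_indicator measurableSet_Ioi,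
          Measure.restrict_restrict_of_subset (Set.Ioi_subset_Ioi (hf₀ y)), lintegral_exp_neg_Ioi]
    _ = ∫⁻ r in Set.Ioi (0 : ℝ), ∫⁻ y,
          (Set.Ioi (f y)).indicator (fun r => ENNReal.ofReal (exp (-r))) r ∂σ :=
        lintegral_lintegral_swap hmeas.aemeasurable
    _ = ∫⁻ r in Set.Ioi (0 : ℝ), ENNReal.ofReal (exp (-r)) * σ {y | f y < r} :=
        lintegral_congr fun r =>
          lintegral_indicator_const (measurableSet_lt hf measurable_const) _

namespace IsUpperAhlforsRegular

variable {X : Type*} [PseudoMetricSpace X] [SecondCountableTopology X] [MeasurableSpace X]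
  [OpensMeasurableSpace X] {σ : Measure X} {d c a : ℝ}

theorem lintegral_gaussian_le (hσ : IsUpperAhlforsRegular d c σ) (hd : -2 < d) (hc : 0 ≤ c)
    (ha : 0 < a) (x : X) :
    ∫⁻ y, ENNReal.ofReal (exp (-dist x y ^ 2 / a)) ∂σ ≤
      ENNReal.ofReal (c * a ^ (d / 2) * Gamma (d / 2 + 1)) := by
  have := hσ.isLocallyFiniteMeasure
  have hK : 0 ≤ c * a ^ (d / 2) := by positivity
  simp only [neg_div]
  calc ∫⁻ y, ENNReal.ofReal (exp (-(dist x y ^ 2 / a))) ∂σ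
      = ∫⁻ r in Set.Ioi 0, ENNReal.ofReal (exp (-r)) * σ {y | dist x y ^ 2 / a < r} :=
        lintegral_exp_neg_eq_lintegral_meas_lt σ (by fun_prop) fun y => by positivity
    _ ≤ ∫⁻ r in Set.Ioi 0, ENNReal.ofReal (c * a ^ (d / 2)) *
          ENNReal.ofReal (exp (-r) * r ^ (d / 2 + 1 - 1)) := by
        refine setLIntegral_mono' measurableSet_Ioi fun r hr => ?_
        refine (mul_le_mul_right (hσ.measure_sq_dist_div_lt_le x ha hr) _).trans_eq ?_
        rw [← ENNReal.ofReal_mul (exp_pos _).le, ← ENNReal.ofReal_mul hK, add_sub_cancel_right]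
        ring_nf
    _ = ENNReal.ofReal (c * a ^ (d / 2) * Gamma (d / 2 + 1)) := by
        rw [lintegral_const_mul _ (by fun_prop), lintegral_exp_neg_mul_rpow (by linarith),
          ENNReal.ofReal_mul hK]

theorem integrable_gaussian (hσ : IsUpperAhlforsRegular d c σ) (hd : -2 < d) (hc : 0 ≤ c)
    (ha : 0 < a) (x : X) : Integrable (fun y => exp (-dist x y ^ 2 / a)) σ := by
  refine ⟨by fun_prop, ?_⟩
  rw [hasFiniteIntegral_iff_ofReal (ae_of_all _ fun y => (exp_pos _).le)]
  exact (hσ.lintegral_gaussian_le hd hc ha x).trans_lt ENNReal.ofReal_lt_top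

theorem integral_gaussian_le (hσ : IsUpperAhlforsRegular d c σ) (hd : -2 < d) (hc : 0 ≤ c)
    (ha : 0 < a) (x : X) :
    ∫ y, exp (-dist x y ^ 2 / a) ∂σ ≤ c * a ^ (d / 2) * Gamma (d / 2 + 1) := by
  have hGamma : 0 < Gamma (d / 2 + 1) := Gamma_pos_of_pos (by linarith)
  rw [integral_eq_lintegral_of_nonneg_ae (ae_of_all _ fun y => (exp_pos _).le) (by fun_prop)]
  exact ENNReal.toReal_le_of_le_ofReal (by positivity) (hσ.lintegral_gaussian_le hd hc ha x)

end IsUpperAhlforsRegular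

theorem lipschitzWith_exp_neg_sq_div_two : LipschitzWith 1 fun u : ℝ => exp (-u ^ 2 / 2) := by
  have hderiv (u : ℝ) : HasDerivAt (fun u : ℝ => exp (-u ^ 2 / 2)) (exp (-u ^ 2 / 2) * -u) u := by
    convert! ((hasDerivAt_pow 2 u).neg.div_const 2).exp using 1
    simp only [Nat.cast_ofNat, Nat.add_one_sub_one, pow_one, Pi.neg_apply]
    ring
  refine lipschitzWith_of_nnnorm_deriv_le (fun u => (hderiv u).differentiableAt) fun u => ?_
  have hle : |u| ≤ exp (u ^ 2 / 2) := by
    nlinarith [add_one_le_exp (u ^ 2 / 2), sq_nonneg (|u| - 1), sq_abs u]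
  rw [(hderiv u).deriv, ← NNReal.coe_le_coe, coe_nnnorm, NNReal.coe_one, norm_mul, norm_neg,
    Real.norm_eq_abs, Real.norm_eq_abs, abs_exp, neg_div, exp_neg]
  exact inv_mul_le_one_of_le₀ hle (exp_pos _).le

theorem abs_exp_neg_sq_sub_le {β : ℝ} (hβ₀ : 0 ≤ β) (hβ₁ : β ≤ 1) (u v : ℝ) :
    |exp (-u ^ 2) - exp (-v ^ 2)| ≤ |u - v| ^ β * (exp (-u ^ 2 / 2) + exp (-v ^ 2 / 2)) := by
  have hsq (w : ℝ) : exp (-w ^ 2) = exp (-w ^ 2 / 2) ^ 2 := by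
    rw [← exp_nat_mul]; push_cast; ring_nf
  have hmem (w : ℝ) : exp (-w ^ 2 / 2) ∈ Set.Icc 0 1 :=
    ⟨(exp_pos _).le, exp_le_one_iff.2 (by nlinarith [sq_nonneg w])⟩
  have hdist : |exp (-u ^ 2 / 2) - exp (-v ^ 2 / 2)| ≤ |u - v| := by
    simpa [Real.dist_eq] using lipschitzWith_exp_neg_sq_div_two.dist_le_mul u v
  have hone : |exp (-u ^ 2 / 2) - exp (-v ^ 2 / 2)| ≤ 1 := by
    simpa using abs_sub_le_of_le_of_le (hmem u).1 (hmem u).2 (hmem v).1 (hmem v).2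
  have hholder : |exp (-u ^ 2 / 2) - exp (-v ^ 2 / 2)| ≤ |u - v| ^ β :=
    (self_le_rpow_of_le_one (abs_nonneg _) hone hβ₁).trans
      (rpow_le_rpow (abs_nonneg _) hdist hβ₀)
  rw [hsq u, hsq v, sq_sub_sq, abs_mul, abs_of_pos (by positivity), mul_comm]
  gcongr

section HeatKernel

variable {n : ℕ} {s : ℝ}

theorem measurable_Sn (n : ℕ) :
    Measurable fun p : ℝ × EuclideanSpace ℝ (Fin n) => Sn n p.1 p.2 :=
  Measurable.ite (measurableSet_lt measurable_const measurable_fst) (by fun_prop) measurable_const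

theorem rpow_four_pi_mul_le (n : ℕ) (hs : 0 < s) :
    (4 * π * s) ^ (-(n : ℝ) / 2) ≤ s ^ (-(n : ℝ) / 2) := by
  refine rpow_le_rpow_of_nonpos hs ?_ ?_
  · nlinarith [pi_gt_three]
  · have : (0 : ℝ) ≤ n := n.cast_nonneg
    linarith

theorem abs_Sn_le (hs : 0 < s) (z : EuclideanSpace ℝ (Fin n)) :
    |Sn n s z| ≤ s ^ (-(n : ℝ) / 2) * exp (-‖z‖ ^ 2 / (4 * s)) := by
  rw [Sn, if_pos hs, abs_of_nonneg (by positivity)]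
  exact mul_le_mul_of_nonneg_right (rpow_four_pi_mul_le n hs) (exp_pos _).le

theorem abs_Sn_sub_le {β : ℝ} (hβ₀ : 0 ≤ β) (hβ₁ : β ≤ 1) (hs : 0 < s)
    (z w : EuclideanSpace ℝ (Fin n)) :
    |Sn n s z - Sn n s w| ≤ ‖z - w‖ ^ β * s ^ (-(n + β) / 2) *
      (exp (-‖z‖ ^ 2 / (8 * s)) + exp (-‖w‖ ^ 2 / (8 * s))) := by
  have hsq (y : EuclideanSpace ℝ (Fin n)) : (‖y‖ / √(4 * s)) ^ 2 = ‖y‖ ^ 2 / (4 * s) := by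
    rw [div_pow, sq_sqrt (by positivity)]
  have hhalf (y : EuclideanSpace ℝ (Fin n)) :
      -‖y‖ ^ 2 / (8 * s) = -(‖y‖ / √(4 * s)) ^ 2 / 2 := by
    rw [hsq]; ring
  have hSn (y : EuclideanSpace ℝ (Fin n)) :
      Sn n s y = (4 * π * s) ^ (-(n : ℝ) / 2) * exp (-(‖y‖ / √(4 * s)) ^ 2) := by
    rw [Sn, if_pos hs, hsq, ← neg_div]
  have hscale : |‖z‖ / √(4 * s) - ‖w‖ / √(4 * s)| ≤ ‖z - w‖ * s ^ (-(1 / 2) : ℝ) := by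
    rw [← sub_div, abs_div, abs_of_nonneg (sqrt_nonneg _), rpow_neg hs.le, ← sqrt_eq_rpow,
      ← div_eq_mul_inv]
    gcongr
    · exact abs_norm_sub_norm_le z w
    · linarith
  have hpow : s ^ (-(n : ℝ) / 2) * (‖z - w‖ * s ^ (-(1 / 2) : ℝ)) ^ β =
      ‖z - w‖ ^ β * s ^ (-(n + β) / 2) := by
    rw [mul_rpow (norm_nonneg _) (by positivity), ← rpow_mul hs.le, mul_left_comm, ← rpow_add hs]
    ring_nf
  rw [hSn, hSn, ← mul_sub, abs_mul, abs_of_nonneg (by positivity), hhalf, hhalf, ← hpow,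
    mul_assoc (s ^ _)]
  refine mul_le_mul (rpow_four_pi_mul_le n hs) ?_ (abs_nonneg _) (by positivity)
  refine (abs_exp_neg_sq_sub_le hβ₀ hβ₁ _ _).trans ?_
  gcongr

end HeatKernel

section HeatEvolution

variable {n : ℕ} {σ : Measure (EuclideanSpace ℝ (Fin n))} {d c s M : ℝ}
  {f : EuclideanSpace ℝ (Fin n) → ℝ}

/-- The solution at time `s` of the heat equation whose initial datum is the measure `f σ`; the
single layer heat potential superposes these solutions over the starting times. -/
noncomputable def heatEvolution (n : ℕ) (σ : Measure (EuclideanSpace ℝ (Fin n)))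
    (f : EuclideanSpace ℝ (Fin n) → ℝ) (s : ℝ) (x : EuclideanSpace ℝ (Fin n)) : ℝ :=
  ∫ y, Sn n s (x - y) * f y ∂σ

theorem norm_Sn_mul_le (hf : ∀ y, |f y| ≤ M) (hs : 0 < s) (x y : EuclideanSpace ℝ (Fin n)) :
    ‖Sn n s (x - y) * f y‖ ≤ M * s ^ (-(n : ℝ) / 2) * exp (-dist x y ^ 2 / (4 * s)) := by
  rw [norm_mul, dist_eq_norm, mul_assoc, mul_comm]
  exact mul_le_mul (hf y) (abs_Sn_le hs _) (norm_nonneg _) ((abs_nonneg _).trans (hf y))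

theorem integrable_Sn_mul (hσ : IsUpperAhlforsRegular d c σ) (hd : -2 < d) (hc : 0 ≤ c)
    (hfm : AEStronglyMeasurable f σ) (hf : ∀ y, |f y| ≤ M) (hs : 0 < s)
    (x : EuclideanSpace ℝ (Fin n)) : Integrable (fun y => Sn n s (x - y) * f y) σ := by
  have hSn : Measurable fun y => Sn n s (x - y) :=
    (measurable_Sn n).comp (measurable_const.prodMk (measurable_const.sub measurable_id))
  exact ((hσ.integrable_gaussian hd hc (by positivity) x).const_mul _).mono'
    (hSn.aestronglyMeasurable.mul hfm) (ae_of_all _ (norm_Sn_mul_le hf hs x))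

theorem abs_heatEvolution_le (hσ : IsUpperAhlforsRegular d c σ) (hd : -2 < d) (hc : 0 ≤ c)
    (hf : ∀ y, |f y| ≤ M) (hs : 0 < s) (x : EuclideanSpace ℝ (Fin n)) :
    |heatEvolution n σ f s x| ≤
      c * 4 ^ (d / 2) * Gamma (d / 2 + 1) * M * s ^ ((d - n) / 2) := by
  have hM : 0 ≤ M := (abs_nonneg _).trans (hf 0)
  have h4s : 0 < 4 * s := by positivity
  calc |heatEvolution n σ f s x|
      ≤ ∫ y, M * s ^ (-(n : ℝ) / 2) * exp (-dist x y ^ 2 / (4 * s)) ∂σ :=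
        norm_integral_le_of_norm_le ((hσ.integrable_gaussian hd hc h4s x).const_mul _)
          (ae_of_all _ (norm_Sn_mul_le hf hs x))
    _ ≤ M * s ^ (-(n : ℝ) / 2) * (c * (4 * s) ^ (d / 2) * Gamma (d / 2 + 1)) := by
        rw [integral_const_mul]
        gcongr
        exact hσ.integral_gaussian_le hd hc h4s x
    _ = c * 4 ^ (d / 2) * Gamma (d / 2 + 1) * M * s ^ ((d - n) / 2) := by
        rw [mul_rpow (by norm_num) hs.le, sub_div, sub_eq_neg_add, rpow_add hs, neg_div]
        ring

theorem abs_heatEvolution_sub_le {β : ℝ} (hβ₀ : 0 ≤ β) (hβ₁ : β ≤ 1)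
    (hσ : IsUpperAhlforsRegular d c σ) (hd : -2 < d) (hc : 0 ≤ c)
    (hfm : AEStronglyMeasurable f σ) (hf : ∀ y, |f y| ≤ M) (hs : 0 < s)
    (x₁ x₂ : EuclideanSpace ℝ (Fin n)) :
    |heatEvolution n σ f s x₁ - heatEvolution n σ f s x₂| ≤
      2 * c * 8 ^ (d / 2) * Gamma (d / 2 + 1) * M * ‖x₁ - x₂‖ ^ β * s ^ ((d - n - β) / 2) := by
  have hM : 0 ≤ M := (abs_nonneg _).trans (hf 0)
  have h8s : 0 < 8 * s := by positivity
  have hgauss (x : EuclideanSpace ℝ (Fin n)) := hσ.integrable_gaussian hd hc h8s x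
  have hpointwise (y : EuclideanSpace ℝ (Fin n)) :
      ‖Sn n s (x₁ - y) * f y - Sn n s (x₂ - y) * f y‖ ≤
        M * (‖x₁ - x₂‖ ^ β * s ^ (-(n + β) / 2)) *
          (exp (-dist x₁ y ^ 2 / (8 * s)) + exp (-dist x₂ y ^ 2 / (8 * s))) := by
    have hSn := abs_Sn_sub_le hβ₀ hβ₁ hs (x₁ - y) (x₂ - y)
    rw [sub_sub_sub_cancel_right] at hSn
    rw [← sub_mul, norm_mul, dist_eq_norm, dist_eq_norm, mul_assoc, mul_comm]
    exact mul_le_mul (hf y) hSn (norm_nonneg _) hM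
  rw [heatEvolution, heatEvolution, ← integral_sub (integrable_Sn_mul hσ hd hc hfm hf hs x₁)
    (integrable_Sn_mul hσ hd hc hfm hf hs x₂)]
  calc |∫ y, Sn n s (x₁ - y) * f y - Sn n s (x₂ - y) * f y ∂σ|
      ≤ ∫ y, M * (‖x₁ - x₂‖ ^ β * s ^ (-(n + β) / 2)) *
          (exp (-dist x₁ y ^ 2 / (8 * s)) + exp (-dist x₂ y ^ 2 / (8 * s))) ∂σ :=
        norm_integral_le_of_norm_le (((hgauss x₁).add (hgauss x₂)).const_mul _)
          (ae_of_all _ hpointwise)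
    _ ≤ M * (‖x₁ - x₂‖ ^ β * s ^ (-(n + β) / 2)) *
          (c * (8 * s) ^ (d / 2) * Gamma (d / 2 + 1) +
            c * (8 * s) ^ (d / 2) * Gamma (d / 2 + 1)) := by
        rw [integral_const_mul, integral_add (hgauss x₁) (hgauss x₂)]
        gcongr <;> exact hσ.integral_gaussian_le hd hc h8s _
    _ = 2 * c * 8 ^ (d / 2) * Gamma (d / 2 + 1) * M * ‖x₁ - x₂‖ ^ β * s ^ ((d - n - β) / 2) := by
        rw [mul_rpow (by norm_num) hs.le,
          show (d - n - β) / 2 = -(n + β) / 2 + d / 2 by ring, rpow_add hs]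
        ring

end HeatEvolution

section TimeIntegral

variable {p t : ℝ}

theorem integrableOn_Ioo_sub_rpow (hp : -1 < p) (t : ℝ) :
    IntegrableOn (fun τ => (t - τ) ^ p) (Set.Ioo 0 t) := by
  have h := (intervalIntegral.intervalIntegrable_rpow' (a := 0) (b := t) hp).comp_sub_left t
  rw [sub_zero, sub_self] at h
  exact h.2.mono_set Set.Ioo_subset_Ioc_self

theorem integral_Ioo_sub_rpow (hp : -1 < p) (ht : 0 ≤ t) :
    ∫ τ in Set.Ioo 0 t, (t - τ) ^ p = t ^ (p + 1) / (p + 1) := by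
  rw [← integral_Ioc_eq_integral_Ioo, ← intervalIntegral.integral_of_le ht,
    intervalIntegral.integral_comp_sub_left (fun s => s ^ p) t, sub_self, sub_zero,
    integral_rpow (Or.inl hp), zero_rpow (by linarith), sub_zero]

end TimeIntegral

section SingleLayer

variable {n : ℕ} {σ : Measure (EuclideanSpace ℝ (Fin n))} {d c M t : ℝ}
  {μ : ℝ → EuclideanSpace ℝ (Fin n) → ℝ}

-- The kernel bounds require a positive time, which excludes the endpoint `τ = t`.
theorem singleLayer_eq_integral_heatEvolution (n : ℕ) (σ : Measure (EuclideanSpace ℝ (Fin n)))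
    (μ : ℝ → EuclideanSpace ℝ (Fin n) → ℝ) (t : ℝ) (x : EuclideanSpace ℝ (Fin n)) :
    singleLayer n σ μ t x = ∫ τ in Set.Ioo 0 t, heatEvolution n σ (μ τ) (t - τ) x :=
  integral_Ioc_eq_integral_Ioo

theorem stronglyMeasurable_heatEvolution [SFinite σ] (hμ : Measurable (Function.uncurry μ))
    (t : ℝ) (x : EuclideanSpace ℝ (Fin n)) :
    StronglyMeasurable fun τ => heatEvolution n σ (μ τ) (t - τ) x := by
  have hSn : Measurable fun p : ℝ × EuclideanSpace ℝ (Fin n) => Sn n (t - p.1) (x - p.2) :=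
    (measurable_Sn n).comp
      ((measurable_const.sub measurable_fst).prodMk (measurable_const.sub measurable_snd))
  exact (hSn.mul hμ).stronglyMeasurable.integral_prod_right'

theorem integrableOn_heatEvolution (hσ : IsUpperAhlforsRegular d c σ) (hd : n < d + 2)
    (hc : 0 ≤ c) (hμ : Measurable (Function.uncurry μ)) (hM : ∀ τ y, |μ τ y| ≤ M) (t : ℝ)
    (x : EuclideanSpace ℝ (Fin n)) :
    IntegrableOn (fun τ => heatEvolution n σ (μ τ) (t - τ) x) (Set.Ioo 0 t) := by
  have := hσ.isLocallyFiniteMeasure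
  have hd₂ : -2 < d := by linarith [n.cast_nonneg (α := ℝ)]
  have hp : -1 < (d - n) / 2 := by linarith
  refine ((integrableOn_Ioo_sub_rpow hp t).const_mul
      (c * 4 ^ (d / 2) * Gamma (d / 2 + 1) * M)).mono'
    (stronglyMeasurable_heatEvolution hμ t x).aestronglyMeasurable ?_
  filter_upwards [ae_restrict_mem measurableSet_Ioo] with τ hτ
  exact abs_heatEvolution_le hσ hd₂ hc (hM τ) (sub_pos.2 hτ.2) x

theorem abs_singleLayer_sub_le {β : ℝ} (hβ₀ : 0 ≤ β) (hβ₁ : β ≤ 1)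
    (hσ : IsUpperAhlforsRegular d c σ) (hd : n + β < d + 2) (hc : 0 ≤ c)
    (hμ : Measurable (Function.uncurry μ)) (hM : ∀ τ y, |μ τ y| ≤ M) (ht : 0 ≤ t)
    (x₁ x₂ : EuclideanSpace ℝ (Fin n)) :
    |singleLayer n σ μ t x₁ - singleLayer n σ μ t x₂| ≤
      2 * c * 8 ^ (d / 2) * Gamma (d / 2 + 1) * M * ‖x₁ - x₂‖ ^ β *
        (t ^ ((d - n - β) / 2 + 1) / ((d - n - β) / 2 + 1)) := by
  have hd₂ : -2 < d := by linarith [n.cast_nonneg (α := ℝ)]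
  have hp : -1 < (d - n - β) / 2 := by linarith
  have hint (x : EuclideanSpace ℝ (Fin n)) :=
    integrableOn_heatEvolution hσ (by linarith) hc hμ hM t x
  rw [singleLayer_eq_integral_heatEvolution, singleLayer_eq_integral_heatEvolution,
    ← integral_sub (hint x₁) (hint x₂), ← integral_Ioo_sub_rpow hp ht, ← integral_const_mul,
    ← Real.norm_eq_abs]
  refine norm_integral_le_of_norm_le ((integrableOn_Ioo_sub_rpow hp t).const_mul _) ?_
  filter_upwards [ae_restrict_mem measurableSet_Ioo] with τ hτ
  exact abs_heatEvolution_sub_le hβ₀ hβ₁ hσ hd₂ hc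
    hμ.of_uncurry_left.aestronglyMeasurable (hM τ) (sub_pos.2 hτ.2) x₁ x₂

end SingleLayer

theorem singleLayer_holder_space_general (n : ℕ) {d c T β : ℝ} (hc : 0 < c) (hT : 0 < T)
    (hβ₀ : 0 ≤ β) (hβ₁ : β ≤ 1) (hd : n + β < d + 2) :
    ∃ C : ℝ, 0 < C ∧ ∀ σ : Measure (EuclideanSpace ℝ (Fin n)), IsUpperAhlforsRegular d c σ →
      ∀ μ : ℝ → EuclideanSpace ℝ (Fin n) → ℝ, Measurable (Function.uncurry μ) →
      ∀ M : ℝ, (∀ t x, |μ t x| ≤ M) →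
      ∀ t ∈ Set.Icc (0 : ℝ) T, ∀ x₁ x₂ : EuclideanSpace ℝ (Fin n),
        |singleLayer n σ μ t x₁ - singleLayer n σ μ t x₂| ≤ C * M * ‖x₁ - x₂‖ ^ β := by
  have hGamma : 0 < Gamma (d / 2 + 1) :=
    Gamma_pos_of_pos (by linarith [n.cast_nonneg (α := ℝ)])
  have hq : 0 < (d - n - β) / 2 + 1 := by linarith
  refine ⟨2 * c * 8 ^ (d / 2) * Gamma (d / 2 + 1) *
    (T ^ ((d - n - β) / 2 + 1) / ((d - n - β) / 2 + 1)), by positivity, ?_⟩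
  intro σ hσ μ hμ M hM t ht x₁ x₂
  have hM₀ : 0 ≤ M := (abs_nonneg _).trans (hM 0 0)
  have htT : t ^ ((d - n - β) / 2 + 1) ≤ T ^ ((d - n - β) / 2 + 1) :=
    rpow_le_rpow ht.1 ht.2 hq.le
  calc |singleLayer n σ μ t x₁ - singleLayer n σ μ t x₂|
      ≤ 2 * c * 8 ^ (d / 2) * Gamma (d / 2 + 1) * M * ‖x₁ - x₂‖ ^ β *
          (t ^ ((d - n - β) / 2 + 1) / ((d - n - β) / 2 + 1)) :=
        abs_singleLayer_sub_le hβ₀ hβ₁ hσ hd hc.le hμ hM ht.1 x₁ x₂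
    _ ≤ 2 * c * 8 ^ (d / 2) * Gamma (d / 2 + 1) * M * ‖x₁ - x₂‖ ^ β *
          (T ^ ((d - n - β) / 2 + 1) / ((d - n - β) / 2 + 1)) := by gcongr
    _ = _ := by ring

/-- If `σ` is upper `(n−1)`-Ahlfors regular with constant `c`, then for every `β ∈ (0,1)` there
is a constant `C > 0`, depending only on `n`, `c`, `T`, `β` and the total mass `σ(ℝⁿ)`, such
that the single layer heat potential is `β`-Hölder continuous in space, with constant
`C · sup|μ|`. -/
theorem singleLayer_holder_space (n : ℕ) (hn : 2 ≤ n) (c : ℝ) (hc : 0 < c)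
    (T : ℝ) (hT : 0 < T) (β : ℝ) (hβ : β ∈ Set.Ioo (0 : ℝ) 1) (m : ENNReal) :
    ∃ C : ℝ, 0 < C ∧
      ∀ σ : Measure (EuclideanSpace ℝ (Fin n)), IsFiniteMeasure σ →
      σ Set.univ = m →
      ∀ K : Set (EuclideanSpace ℝ (Fin n)), IsCompact K →
        K = {x | ∀ U : Set (EuclideanSpace ℝ (Fin n)), IsOpen U → x ∈ U → σ U ≠ 0} →
      (∀ (x : EuclideanSpace ℝ (Fin n)) (r : ℝ), 0 < r →
        σ (Metric.closedBall x r) ≤ ENNReal.ofReal (c * r ^ (n - 1))) →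
      ∀ μ : ℝ → EuclideanSpace ℝ (Fin n) → ℝ, Measurable (Function.uncurry μ) →
      ∀ M : ℝ, (∀ t x, |μ t x| ≤ M) →
      ∀ t ∈ Set.Icc (0 : ℝ) T, ∀ x₁ x₂ : EuclideanSpace ℝ (Fin n),
        |singleLayer n σ μ t x₁ - singleLayer n σ μ t x₂| ≤
          C * M * ‖x₁ - x₂‖ ^ β := by
  obtain ⟨C, hC, hbound⟩ := singleLayer_holder_space_general n hc hT hβ.1.le hβ.2.le
    (show n + β < n - 1 + 2 by linarith [hβ.2])
  exact ⟨C, hC, fun σ _ _ _ _ _ hσ => hbound σ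
    ((isUpperAhlforsRegular_natCast_sub_one_iff (by omega)).2 hσ)⟩
end
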